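/- Let 1 ≤ p < n and let r be an integer with p ≤ r < n such that |λ_p|/2 ≤ λ_p − λ_{r+1}. Set x := max_{1≤i,j≤r} |u_iᵀ E u_j|. Assume that 0 < 4‖E‖ ≤ δ_p := λ_p − λ_{p+1} ≤ |λ_p|/4. Then ‖Π̃_p − Π_p‖ ≤ 24 ( (‖E‖/|λ_p|)·log(6σ₁/δ_p) + r²x/δ_p ). -/

import Mathlib

open Matrix

/-- The spectral norm (ℓ²→ℓ² operator norm) of a matrix. -/
noncomputable def specNorm {𝕜 : Type*} [RCLike 𝕜] {m n : ℕ}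
    (M : Matrix (Fin m) (Fin n) 𝕜) : ℝ :=
  ‖LinearMap.toContinuousLinearMap (Matrix.toEuclideanLin M)‖

/-!
Write `P`, `P'` for the spectral projections of `A` and `A + E`. They have the same rank, so
`‖P' - P‖` is at most `‖(1 - P) P'‖`, and `1 - P` splits into a *far* block (eigenvectors of
`A` with index above `r`) and a *near* block (indices from `p + 1` to `r`). If `Q` projects
onto one of these blocks and `g` is the gap separating the block from `λ_p`, then `A Q = Q A`
and Weyl's inequality give the Davis–Kahan bound `(g - ‖E‖) ‖Q P'‖ ≤ ‖Q E P'‖`. On the far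
block `g` is at least `|λ_p| / 2`, which is where the term in `‖E‖ / |λ_p|` comes from. On the
near block `g` is only `δ_p`, but there `‖Q E P'‖` is at most the norm of the `r × r`
compression of `E`, hence at most `r x`, plus `‖E‖` times the far bound, and `4 ‖E‖ ≤ δ_p`
makes this last term harmless. The logarithm is at least `1` because `δ_p ≤ 2 σ₁`.
-/

section Projections

variable {𝕜 H : Type*} [RCLike 𝕜] [NormedAddCommGroup H] [InnerProductSpace 𝕜 H]
  {U V : Submodule 𝕜 H}

theorem one_le_norm_starProjection_mul_starProjection [U.HasOrthogonalProjection]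
    [V.HasOrthogonalProjection] (h : ¬Disjoint U V) :
    1 ≤ ‖U.starProjection * V.starProjection‖ := by
  rw [disjoint_iff] at h
  obtain ⟨z, ⟨hzU, hzV⟩, hz⟩ := (Submodule.ne_bot_iff _).mp h
  have hfix : (U.starProjection * V.starProjection) z = z := by
    rw [mul_apply_eq_comp, Submodule.starProjection_eq_self_iff.mpr hzV,
      Submodule.starProjection_eq_self_iff.mpr hzU]
  have hle := (U.starProjection * V.starProjection).le_opNorm z
  rw [hfix] at hle
  exact (le_mul_iff_one_le_left (norm_pos_iff.mpr hz)).mp hle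

theorem norm_starProjection_mul_comm [CompleteSpace H] [U.HasOrthogonalProjection]
    [V.HasOrthogonalProjection] :
    ‖U.starProjection * V.starProjection‖ = ‖V.starProjection * U.starProjection‖ := by
  rw [← norm_star (V.starProjection * U.starProjection), star_mul,
    (isSelfAdjoint_starProjection U).star_eq, (isSelfAdjoint_starProjection V).star_eq]

theorem norm_starProjection_sub_starProjection_le [U.HasOrthogonalProjection]
    [V.HasOrthogonalProjection] {c : ℝ} (hUc : ‖Uᗮ.starProjection * V.starProjection‖ ≤ c)
    (hVc : ‖U.starProjection * Vᗮ.starProjection‖ ≤ c) :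
    ‖V.starProjection - U.starProjection‖ ≤ c := by
  have hc : 0 ≤ c := (norm_nonneg _).trans hUc
  refine ContinuousLinearMap.opNorm_le_bound _ hc fun z => ?_
  set v := V.starProjection z
  set w := Vᗮ.starProjection z
  have hz : z = v + w := (V.starProjection_add_starProjection_orthogonal z).symm
  have hU : U.starProjection (v - U.starProjection z) = -U.starProjection w := by
    rw [map_sub, Submodule.starProjection_eq_self_iff.mpr (U.starProjection_apply_mem z), hz,
      map_add]
    abel
  have hUperp : Uᗮ.starProjection (v - U.starProjection z) = Uᗮ.starProjection v := by
    rw [map_sub, U.starProjection_orthogonal_apply_eq_zero (U.starProjection_apply_mem z), sub_zero]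
  have hw_le : ‖U.starProjection w‖ ≤ c * ‖w‖ := by
    have hw := (U.starProjection * Vᗮ.starProjection).le_of_opNorm_le hVc w
    rwa [mul_apply_eq_comp,
      Submodule.starProjection_eq_self_iff.mpr (Vᗮ.starProjection_apply_mem z)] at hw
  have hv_le : ‖Uᗮ.starProjection v‖ ≤ c * ‖v‖ := by
    have hv := (Uᗮ.starProjection * V.starProjection).le_of_opNorm_le hUc v
    rwa [mul_apply_eq_comp,
      Submodule.starProjection_eq_self_iff.mpr (V.starProjection_apply_mem z)] at hv
  refine le_of_sq_le_sq ?_ (by positivity)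
  calc ‖v - U.starProjection z‖ ^ 2
      = ‖U.starProjection w‖ ^ 2 + ‖Uᗮ.starProjection v‖ ^ 2 := by
        rw [Submodule.norm_sq_eq_add_norm_sq_starProjection _ U, hU, hUperp, norm_neg]
    _ ≤ (c * ‖w‖) ^ 2 + (c * ‖v‖) ^ 2 := by gcongr
    _ = (c * ‖z‖) ^ 2 := by
        rw [mul_pow c ‖z‖, Submodule.norm_sq_eq_add_norm_sq_starProjection z V]; ring

variable [FiniteDimensional 𝕜 U] [FiniteDimensional 𝕜 V]

theorem exists_mem_starProjection_eq_of_finrank_eq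
    (hUV : Module.finrank 𝕜 U = Module.finrank 𝕜 V) (hdisj : Disjoint Uᗮ V)
    {y : H} (hy : y ∈ U) : ∃ z ∈ V, U.starProjection z = y := by
  let T : V →ₗ[𝕜] U := U.orthogonalProjectionOnto.toLinearMap ∘ₗ V.subtype
  have hT : Function.Injective T := by
    refine (injective_iff_map_eq_zero T).mpr fun z hz => ?_
    have hzU : (z : H) ∈ Uᗮ := Submodule.orthogonalProjectionOnto_eq_zero_iff.mp hz
    exact Subtype.ext (Submodule.disjoint_def.mp hdisj z hzU z.2)
  obtain ⟨z, hz⟩ :=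
    (LinearMap.injective_iff_surjective_of_finrank_eq_finrank hUV.symm).mp hT ⟨y, hy⟩
  exact ⟨z, z.2, congrArg Subtype.val hz⟩

theorem norm_starProjection_orthogonal_apply_le_of_finrank_eq
    (hUV : Module.finrank 𝕜 U = Module.finrank 𝕜 V) {c : ℝ}
    (hc : ∀ z ∈ V, ‖Uᗮ.starProjection z‖ ≤ c * ‖z‖) {y : H} (hy : y ∈ U) :
    ‖Vᗮ.starProjection y‖ ≤ c * ‖y‖ := by
  rcases le_or_gt 1 c with hc1 | hc1
  · exact (Vᗮ.norm_starProjection_apply_le y).trans (le_mul_of_one_le_left (norm_nonneg y) hc1)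
  have hdisj : Disjoint Uᗮ V := by
    refine Submodule.disjoint_def.mpr fun z hzU hzV => norm_eq_zero.mp ?_
    have hz := hc z hzV
    rw [Submodule.starProjection_eq_self_iff.mpr hzU] at hz
    nlinarith [norm_nonneg z]
  obtain ⟨z, hzV, rfl⟩ := exists_mem_starProjection_eq_of_finrank_eq hUV hdisj hy
  set y := U.starProjection z with hydef
  rcases eq_or_ne z 0 with rfl | hz
  · simp [hydef]
  have hinner : ‖y‖ ^ 2 ≤ ‖V.starProjection y‖ * ‖z‖ :=
    calc ‖y‖ ^ 2 = RCLike.re (inner 𝕜 y z) := (U.re_inner_starProjection_eq_normSq z).symm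
      _ = RCLike.re (inner 𝕜 (V.starProjection y) z) := by
        rw [V.inner_starProjection_left_eq_right, Submodule.starProjection_eq_self_iff.mpr hzV]
      _ ≤ ‖V.starProjection y‖ * ‖z‖ := re_inner_le_norm _ _
  have hpythU := Submodule.norm_sq_eq_add_norm_sq_starProjection z U
  have hpythV := Submodule.norm_sq_eq_add_norm_sq_starProjection y V
  have hc0 : 0 ≤ c := by
    have := (norm_nonneg _).trans (hc z hzV)
    exact nonneg_of_mul_nonneg_left this (norm_pos_iff.mpr hz)
  refine le_of_sq_le_sq (le_of_mul_le_mul_right ?_ (pow_pos (norm_pos_iff.mpr hz) 2))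
    (by positivity)
  calc ‖Vᗮ.starProjection y‖ ^ 2 * ‖z‖ ^ 2
      = ‖y‖ ^ 2 * ‖z‖ ^ 2 - (‖V.starProjection y‖ * ‖z‖) ^ 2 := by rw [hpythV]; ring
    _ ≤ ‖y‖ ^ 2 * ‖z‖ ^ 2 - (‖y‖ ^ 2) ^ 2 := by gcongr
    _ = ‖y‖ ^ 2 * ‖Uᗮ.starProjection z‖ ^ 2 := by rw [hpythU]; ring
    _ ≤ ‖y‖ ^ 2 * (c * ‖z‖) ^ 2 := by gcongr; exact hc z hzV
    _ = (c * ‖y‖) ^ 2 * ‖z‖ ^ 2 := by ring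

theorem norm_starProjection_sub_starProjection_le_of_finrank_eq [CompleteSpace H]
    (hUV : Module.finrank 𝕜 U = Module.finrank 𝕜 V) :
    ‖V.starProjection - U.starProjection‖ ≤ ‖Uᗮ.starProjection * V.starProjection‖ := by
  refine norm_starProjection_sub_starProjection_le le_rfl ?_
  rw [norm_starProjection_mul_comm]
  refine ContinuousLinearMap.opNorm_le_bound _ (norm_nonneg _) fun z => ?_
  refine (norm_starProjection_orthogonal_apply_le_of_finrank_eq hUV (fun v hv => ?_)
    (U.starProjection_apply_mem z)).trans
    (mul_le_mul_of_nonneg_left (U.norm_starProjection_apply_le z) (norm_nonneg _))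
  simpa [Submodule.starProjection_eq_self_iff.mpr hv] using
    (Uᗮ.starProjection * V.starProjection).le_opNorm v

end Projections

section Diagonal

variable {ι 𝕜 H : Type*} [Fintype ι] [RCLike 𝕜] [NormedAddCommGroup H] [InnerProductSpace 𝕜 H]

/-- The span of the vectors of an orthonormal basis indexed by `s`; for an eigenbasis, this is the
invariant subspace belonging to the eigenvalues indexed by `s`. -/
def coordSpan (b : OrthonormalBasis ι 𝕜 H) (s : Finset ι) : Submodule 𝕜 H :=
  Submodule.span 𝕜 (b '' s)

theorem finrank_coordSpan (b : OrthonormalBasis ι 𝕜 H) (s : Finset ι) :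
    Module.finrank 𝕜 (coordSpan b s) = s.card := by
  have hli := (b.orthonormal.comp _ (Subtype.val_injective (p := (· ∈ s)))).linearIndependent
  rw [coordSpan, Set.image_eq_range, ← Fintype.card_coe s]
  exact finrank_span_eq_card hli

theorem apply_mem_coordSpan (b : OrthonormalBasis ι 𝕜 H) {s : Finset ι} {i : ι} (hi : i ∈ s) :
    b i ∈ coordSpan b s :=
  Submodule.subset_span (Set.mem_image_of_mem b hi)

theorem apply_mem_coordSpan_orthogonal (b : OrthonormalBasis ι 𝕜 H) {s : Finset ι} {i : ι}
    (hi : i ∉ s) : b i ∈ (coordSpan b s)ᗮ := by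
  refine (Submodule.mem_orthogonal' _ _).mpr fun z hz => ?_
  induction hz using Submodule.span_induction with
  | mem y hy =>
    obtain ⟨j, hj, rfl⟩ := hy
    exact b.orthonormal.inner_eq_zero fun hij => hi (hij ▸ hj)
  | zero => exact inner_zero_right _
  | add y z _ _ hy hz => rw [inner_add_right, hy, hz, add_zero]
  | smul c y _ hy => rw [inner_smul_right, hy, mul_zero]

variable [DecidableEq ι] [FiniteDimensional 𝕜 H]

/-- The operator acting on the orthonormal basis `b` by the real diagonal entries `f`, as a ring
homomorphism in `f`. Equivalently, the self-adjoint operator with eigenvectors `b` and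
eigenvalues `f`. -/
noncomputable def diagonalOp (b : OrthonormalBasis ι 𝕜 H) : (ι → ℝ) →+* (H →L[𝕜] H) :=
  ((Module.End.toContinuousLinearMap H).toAlgHom.comp
    ((toLinAlgEquiv b.toBasis).toAlgHom.comp (diagonalAlgHom 𝕜))).toRingHom.comp
      ((algebraMap ℝ 𝕜).compLeft ι)

@[simp]
theorem diagonalOp_apply_basis (b : OrthonormalBasis ι 𝕜 H) (f : ι → ℝ) (i : ι) :
    diagonalOp b f (b i) = (f i : 𝕜) • b i := by
  change toLinAlgEquiv b.toBasis (diagonal fun i => (f i : 𝕜)) (b i) = _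
  rw [← b.coe_toBasis, toLinAlgEquiv_self]
  simp [diagonal_apply]

theorem eq_diagonalOp_iff (b : OrthonormalBasis ι 𝕜 H) {T : H →L[𝕜] H} {f : ι → ℝ} :
    T = diagonalOp b f ↔ ∀ i, T (b i) = (f i : 𝕜) • b i := by
  refine ⟨fun h i => by rw [h, diagonalOp_apply_basis], fun h => ?_⟩
  exact ContinuousLinearMap.coe_injective (b.toBasis.ext fun i => by simp [h])

theorem diagonalOp_const (b : OrthonormalBasis ι 𝕜 H) (c : ℝ) :
    diagonalOp b (fun _ => c) = (c : 𝕜) • 1 :=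
  ((eq_diagonalOp_iff b).mpr fun _ => rfl).symm

theorem inner_diagonalOp (b : OrthonormalBasis ι 𝕜 H) (f : ι → ℝ) (z : H) (i : ι) :
    inner 𝕜 (b i) (diagonalOp b f z) = f i * inner 𝕜 (b i) z := by
  conv_lhs => rw [← b.sum_repr' z]
  simp [inner_sum, inner_smul_right, b.inner_eq_ite, mul_comm]

theorem norm_diagonalOp_le (b : OrthonormalBasis ι 𝕜 H) {f : ι → ℝ} {C : ℝ} (hC : 0 ≤ C)
    (hf : ∀ i, |f i| ≤ C) : ‖diagonalOp b f‖ ≤ C := by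
  refine ContinuousLinearMap.opNorm_le_bound _ hC fun z => le_of_sq_le_sq ?_ (by positivity)
  calc ‖diagonalOp b f z‖ ^ 2 = ∑ i, |f i| ^ 2 * ‖inner 𝕜 (b i) z‖ ^ 2 := by
        simp [← b.sum_sq_norm_inner_right, inner_diagonalOp, mul_pow]
    _ ≤ ∑ i, C ^ 2 * ‖inner 𝕜 (b i) z‖ ^ 2 := by gcongr with i; exact hf i
    _ = (C * ‖z‖) ^ 2 := by rw [← Finset.mul_sum, b.sum_sq_norm_inner_right, mul_pow]

/-- The orthogonal projection onto `coordSpan b s`, encoded as a diagonal operator so that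
products of such projections are computed on indicator functions. -/
noncomputable def coordProj (b : OrthonormalBasis ι 𝕜 H) (s : Finset ι) : H →L[𝕜] H :=
  diagonalOp b ((s : Set ι).indicator 1)

theorem starProjection_coordSpan (b : OrthonormalBasis ι 𝕜 H) (s : Finset ι) :
    (coordSpan b s).starProjection = coordProj b s := by
  refine (eq_diagonalOp_iff b).mpr fun i => ?_
  by_cases hi : i ∈ s
  · rw [Submodule.starProjection_eq_self_iff.mpr (apply_mem_coordSpan b hi)]
    simp [hi]
  · rw [(coordSpan b s).starProjection_apply_eq_zero_iff.mpr
      (apply_mem_coordSpan_orthogonal b hi)]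
    simp [hi]

theorem coordProj_apply (b : OrthonormalBasis ι 𝕜 H) (s : Finset ι) (z : H) :
    coordProj b s z = ∑ i ∈ s, inner 𝕜 (b i) z • b i := by
  rw [← b.sum_repr' (coordProj b s z)]
  simp [coordProj, inner_diagonalOp, Set.indicator_apply, apply_ite, ite_smul]

theorem norm_sq_coordProj_apply (b : OrthonormalBasis ι 𝕜 H) (s : Finset ι) (z : H) :
    ‖coordProj b s z‖ ^ 2 = ∑ i ∈ s, ‖inner 𝕜 (b i) z‖ ^ 2 := by
  simp [← b.sum_sq_norm_inner_right, coordProj, inner_diagonalOp, Set.indicator_apply,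
    apply_ite, ite_pow]

theorem norm_coordProj_le_one (b : OrthonormalBasis ι 𝕜 H) (s : Finset ι) :
    ‖coordProj b s‖ ≤ 1 :=
  starProjection_coordSpan b s ▸ (coordSpan b s).starProjection_norm_le

theorem norm_coordProj_mul_le (b : OrthonormalBasis ι 𝕜 H) (s : Finset ι) (T : H →L[𝕜] H) :
    ‖coordProj b s * T‖ ≤ ‖T‖ :=
  (norm_mul_le _ _).trans
    (mul_le_of_le_one_left (norm_nonneg T) (norm_coordProj_le_one b s))

theorem norm_mul_coordProj_le (b : OrthonormalBasis ι 𝕜 H) (s : Finset ι) (T : H →L[𝕜] H) :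
    ‖T * coordProj b s‖ ≤ ‖T‖ :=
  (norm_mul_le _ _).trans
    (mul_le_of_le_one_right (norm_nonneg T) (norm_coordProj_le_one b s))

theorem coordProj_mul_coordProj_of_subset (b : OrthonormalBasis ι 𝕜 H) {s t : Finset ι}
    (hst : s ⊆ t) : coordProj b s * coordProj b t = coordProj b s := by
  rw [coordProj, coordProj, ← map_mul, ← Set.inter_indicator_one,
    Set.inter_eq_left.mpr (Finset.coe_subset.mpr hst)]

theorem coordProj_union (b : OrthonormalBasis ι 𝕜 H) {s t : Finset ι} (hst : Disjoint s t) :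
    coordProj b (s ∪ t) = coordProj b s + coordProj b t := by
  rw [coordProj, coordProj, coordProj, ← map_add, Finset.coe_union,
    Set.indicator_union_of_disjoint (Finset.disjoint_coe.mpr hst)]
  rfl

theorem coordProj_empty (b : OrthonormalBasis ι 𝕜 H) : coordProj b ∅ = 0 := by
  rw [coordProj, Finset.coe_empty, Set.indicator_empty']
  exact map_zero _

theorem coordProj_univ (b : OrthonormalBasis ι 𝕜 H) : coordProj b Finset.univ = 1 := by
  rw [coordProj, Finset.coe_univ, Set.indicator_univ, map_one]

theorem coordProj_add_coordProj_compl (b : OrthonormalBasis ι 𝕜 H) (s : Finset ι) :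
    coordProj b s + coordProj b sᶜ = 1 := by
  rw [← coordProj_union b disjoint_compl_right, Finset.union_compl, coordProj_univ]

theorem norm_coordProj_compl_mul_le (b : OrthonormalBasis ι 𝕜 H) {s t : Finset ι} (hts : t ⊆ s)
    (T : H →L[𝕜] H) :
    ‖coordProj b tᶜ * T‖ ≤ ‖coordProj b (s \ t) * T‖ + ‖coordProj b sᶜ * T‖ := by
  have hcompl : tᶜ = (s \ t) ∪ sᶜ := by grind [Finset.mem_compl]
  rw [hcompl, coordProj_union b (disjoint_compl_right.mono_left Finset.sdiff_subset), add_mul]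
  exact norm_add_le _ _

theorem starProjection_coordSpan_orthogonal (b : OrthonormalBasis ι 𝕜 H) (s : Finset ι) :
    (coordSpan b s)ᗮ.starProjection = coordProj b sᶜ := by
  rw [Submodule.starProjection_orthogonal', starProjection_coordSpan, sub_eq_iff_eq_add',
    coordProj_add_coordProj_compl]

end Diagonal

section DavisKahan

variable {ι ι' 𝕜 H : Type*} [Fintype ι] [DecidableEq ι] [Fintype ι'] [DecidableEq ι'] [RCLike 𝕜]
  [NormedAddCommGroup H] [InnerProductSpace 𝕜 H] [FiniteDimensional 𝕜 H]
  (b : OrthonormalBasis ι 𝕜 H) (b' : OrthonormalBasis ι' 𝕜 H)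

theorem norm_coordProj_mul_mul_coordProj_le (s : Finset ι) (T : H →L[𝕜] H) (t : Finset ι') :
    ‖coordProj b s * T * coordProj b' t‖ ≤ ‖T‖ :=
  (norm_mul_coordProj_le b' t _).trans (norm_coordProj_mul_le b s T)

theorem norm_coordProj_mul_mul_coordProj_le_add {s q : Finset ι} (hqs : q ⊆ s) (t : Finset ι')
    (T : H →L[𝕜] H) :
    ‖coordProj b q * T * coordProj b' t‖ ≤
      ‖coordProj b s * T * coordProj b s‖ + ‖T‖ * ‖coordProj b sᶜ * coordProj b' t‖ := by
  have hsplit : coordProj b q * T * coordProj b' t =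
      coordProj b q * (coordProj b s * T * coordProj b s) * coordProj b' t +
        coordProj b q * T * (coordProj b sᶜ * coordProj b' t) :=
    calc coordProj b q * T * coordProj b' t
        = coordProj b q * T * (coordProj b s + coordProj b sᶜ) * coordProj b' t := by
          rw [coordProj_add_coordProj_compl, mul_one]
      _ = (coordProj b q * coordProj b s) * T * coordProj b s * coordProj b' t +
            coordProj b q * T * (coordProj b sᶜ * coordProj b' t) := by
          rw [coordProj_mul_coordProj_of_subset b hqs]; noncomm_ring
      _ = _ := by simp only [mul_assoc]
  rw [hsplit]
  refine norm_add_le_of_le (norm_coordProj_mul_mul_coordProj_le b b' _ _ _) ?_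
  exact norm_mul_le_of_le (norm_coordProj_mul_le b q T) le_rfl

theorem norm_coordProj_sub_le_of_card_eq {s : Finset ι} {t : Finset ι'} (hst : s.card = t.card) :
    ‖coordProj b' t - coordProj b s‖ ≤ ‖coordProj b sᶜ * coordProj b' t‖ := by
  have := FiniteDimensional.complete 𝕜 H
  rw [← starProjection_coordSpan_orthogonal, ← starProjection_coordSpan,
    ← starProjection_coordSpan]
  refine norm_starProjection_sub_starProjection_le_of_finrank_eq ?_
  rw [finrank_coordSpan, finrank_coordSpan, hst]

theorem coordProj_mul_diagonalOp_mul_coordProj (s : Finset ι) (l : ι → ℝ) (t : Finset ι')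
    (μ : ι' → ℝ) :
    coordProj b s * coordProj b' t * diagonalOp b' ((t : Set ι').indicator μ) =
      coordProj b s * (diagonalOp b' μ - diagonalOp b l) * coordProj b' t +
        diagonalOp b ((s : Set ι).indicator l) * (coordProj b s * coordProj b' t) := by
  have hs : coordProj b s * diagonalOp b l =
      diagonalOp b ((s : Set ι).indicator l) * coordProj b s := by
    rw [coordProj, ← map_mul, ← map_mul]
    congr 1; ext i; by_cases hi : i ∈ s <;> simp [hi]
  have ht : coordProj b' t * diagonalOp b' ((t : Set ι').indicator μ) =
      diagonalOp b' μ * coordProj b' t := by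
    rw [coordProj, ← map_mul, ← map_mul]
    congr 1; ext i; by_cases hi : i ∈ t <;> simp [hi]
  calc coordProj b s * coordProj b' t * diagonalOp b' ((t : Set ι').indicator μ)
      = coordProj b s * (diagonalOp b' μ - diagonalOp b l) * coordProj b' t +
          coordProj b s * diagonalOp b l * coordProj b' t := by
        rw [mul_assoc, ht]; noncomm_ring
    _ = _ := by rw [hs, mul_assoc (diagonalOp b _)]

theorem mul_norm_le_norm_mul_diagonalOp (t : Finset ι) {μ : ι → ℝ} {a : ℝ} (ha : 0 ≤ a)
    (hμ : ∀ i ∈ t, a ≤ μ i) (T : H →L[𝕜] H) :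
    a * ‖T * coordProj b t‖ ≤ ‖T * diagonalOp b ((t : Set ι).indicator μ)‖ := by
  rcases ha.eq_or_lt with rfl | ha
  · simp
  have hinv : coordProj b t =
      diagonalOp b ((t : Set ι).indicator μ) * diagonalOp b ((t : Set ι).indicator μ⁻¹) := by
    rw [coordProj, ← map_mul]
    congr 1
    ext i
    by_cases hi : i ∈ t
    · simp [hi, (ha.trans_le (hμ i hi)).ne']
    · simp [hi]
  have hnorm : ‖diagonalOp b ((t : Set ι).indicator μ⁻¹)‖ ≤ a⁻¹ := by
    refine norm_diagonalOp_le b (by positivity) fun i => ?_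
    by_cases hi : i ∈ t
    · have := ha.trans_le (hμ i hi)
      simpa [hi, abs_of_pos this] using (inv_le_inv₀ this ha).mpr (hμ i hi)
    · simp [hi, ha.le]
  calc a * ‖T * coordProj b t‖
      ≤ a * (‖T * diagonalOp b ((t : Set ι).indicator μ)‖ * a⁻¹) := by
        rw [hinv, ← mul_assoc]
        gcongr
        exact (norm_mul_le _ _).trans (by gcongr)
    _ = ‖T * diagonalOp b ((t : Set ι).indicator μ)‖ := by field_simp

theorem sub_mul_norm_coordProj_mul_coordProj_le_of_abs_le {s : Finset ι} {t : Finset ι'}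
    {l : ι → ℝ} {μ : ι' → ℝ} {a c : ℝ} (hc : 0 ≤ c) (ha : 0 ≤ a) (hl : ∀ i ∈ s, |l i| ≤ c)
    (hμ : ∀ i ∈ t, a ≤ μ i) :
    (a - c) * ‖coordProj b s * coordProj b' t‖ ≤
      ‖coordProj b s * (diagonalOp b' μ - diagonalOp b l) * coordProj b' t‖ := by
  set Y := coordProj b s * coordProj b' t
  have hlnorm : ‖diagonalOp b ((s : Set ι).indicator l)‖ ≤ c := by
    refine norm_diagonalOp_le b hc fun i => ?_
    by_cases hi : i ∈ s
    · simpa [hi] using hl i hi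
    · simpa [hi] using hc
  have hY : a * ‖Y‖ ≤
      ‖coordProj b s * (diagonalOp b' μ - diagonalOp b l) * coordProj b' t‖ + c * ‖Y‖ :=
    calc a * ‖Y‖ = a * ‖Y * coordProj b' t‖ := by
          rw [mul_assoc (coordProj b s), coordProj_mul_coordProj_of_subset b' subset_rfl]
      _ ≤ ‖Y * diagonalOp b' ((t : Set ι').indicator μ)‖ :=
          mul_norm_le_norm_mul_diagonalOp b' t ha hμ Y
      _ ≤ ‖coordProj b s * (diagonalOp b' μ - diagonalOp b l) * coordProj b' t‖ + c * ‖Y‖ := by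
          rw [coordProj_mul_diagonalOp_mul_coordProj]
          refine (norm_add_le _ _).trans (by gcongr; exact (norm_mul_le _ _).trans (by gcongr))
  linarith

theorem sub_mul_norm_coordProj_mul_coordProj_le {s : Finset ι} {t : Finset ι'}
    {l : ι → ℝ} {μ : ι' → ℝ} {a c : ℝ} (hl : ∀ i ∈ s, l i ≤ c) (hμ : ∀ i ∈ t, a ≤ μ i) :
    (a - c) * ‖coordProj b s * coordProj b' t‖ ≤
      ‖coordProj b s * (diagonalOp b' μ - diagonalOp b l) * coordProj b' t‖ := by
  -- Adding the same `τ` to both spectra changes neither side and makes both of them nonnegative.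
  obtain ⟨κ, hκ⟩ := (Set.finite_range fun i => |l i|).bddAbove
  replace hκ : ∀ i, |l i| ≤ κ := fun i => hκ ⟨i, rfl⟩
  set τ := |κ| + |a| + |c|
  have hshift : diagonalOp b' μ - diagonalOp b l =
      diagonalOp b' (μ + fun _ => τ) - diagonalOp b (l + fun _ => τ) := by
    rw [map_add, map_add, diagonalOp_const, diagonalOp_const, add_sub_add_right_eq_sub]
  rw [hshift, ← add_sub_add_right_eq_sub a c τ]
  refine sub_mul_norm_coordProj_mul_coordProj_le_of_abs_le b b' ?_ ?_ (fun i hi => ?_)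
    fun i hi => by simpa using hμ i hi
  · grind
  · grind
  · have := hκ i; have := hl i hi
    simp only [Pi.add_apply]
    grind

end DavisKahan

section Weyl

variable {ι 𝕜 H : Type*} [Fintype ι] [LinearOrder ι] [LocallyFiniteOrderBot ι]
  [LocallyFiniteOrderTop ι] [RCLike 𝕜] [NormedAddCommGroup H] [InnerProductSpace 𝕜 H]
  [FiniteDimensional 𝕜 H] (b b' : OrthonormalBasis ι 𝕜 H)

theorem not_disjoint_coordSpan_Ici_coordSpan_Iic (k : ι) :
    ¬Disjoint (coordSpan b' (Finset.Ici k)) (coordSpan b (Finset.Iic k)) := fun hdisj => by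
  have hdim := Submodule.finrank_add_finrank_le_of_disjoint hdisj
  rw [finrank_coordSpan, finrank_coordSpan, Module.finrank_eq_card_basis b.toBasis,
    ← Finset.card_union_add_card_inter] at hdim
  have hunion : Finset.Ici k ∪ Finset.Iic k = Finset.univ := by
    ext i; simpa using le_total k i
  have hinter : k ∈ Finset.Ici k ∩ Finset.Iic k := by simp
  have := Finset.card_pos.mpr ⟨k, hinter⟩
  rw [hunion, Finset.card_univ] at hdim
  omega

theorem sub_norm_diagonalOp_sub_le {l μ : ι → ℝ} (hl : Antitone l) (hμ : Antitone μ) (k : ι) :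
    l k - ‖diagonalOp b' μ - diagonalOp b l‖ ≤ μ k := by
  rcases le_or_gt (l k) (μ k) with hk | hk
  · linarith [norm_nonneg (diagonalOp b' μ - diagonalOp b l)]
  have hone : 1 ≤ ‖coordProj b' (Finset.Ici k) * coordProj b (Finset.Iic k)‖ := by
    rw [← starProjection_coordSpan, ← starProjection_coordSpan]
    exact one_le_norm_starProjection_mul_starProjection
      (not_disjoint_coordSpan_Ici_coordSpan_Iic b b' k)
  rw [sub_le_comm, norm_sub_rev]
  calc l k - μ k
      ≤ (l k - μ k) * ‖coordProj b' (Finset.Ici k) * coordProj b (Finset.Iic k)‖ :=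
        le_mul_of_one_le_right (sub_pos.mpr hk).le hone
    _ ≤ ‖coordProj b' (Finset.Ici k) * (diagonalOp b l - diagonalOp b' μ) *
          coordProj b (Finset.Iic k)‖ :=
        sub_mul_norm_coordProj_mul_coordProj_le b' b (fun i hi => hμ (Finset.mem_Ici.mp hi))
          fun i hi => hl (Finset.mem_Iic.mp hi)
    _ ≤ ‖diagonalOp b l - diagonalOp b' μ‖ :=
        norm_coordProj_mul_mul_coordProj_le b' b _ _ _

end Weyl

section Perturbation

variable {ι 𝕜 H : Type*} [Fintype ι] [LinearOrder ι] [LocallyFiniteOrderBot ι]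
  [LocallyFiniteOrderTop ι] [RCLike 𝕜] [NormedAddCommGroup H] [InnerProductSpace 𝕜 H]
  [FiniteDimensional 𝕜 H] (b b' : OrthonormalBasis ι 𝕜 H) {l μ : ι → ℝ} {k : ι}

theorem norm_coordProj_mul_coordProj_Iic_le (hl : Antitone l) (hμ : Antitone μ) {q : Finset ι}
    {g : ℝ} (hg : 0 < g) (hlow : ∀ i ∈ q, l i ≤ l k - g)
    (hE : 4 * ‖diagonalOp b' μ - diagonalOp b l‖ ≤ g) :
    ‖coordProj b q * coordProj b' (Finset.Iic k)‖ ≤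
      4 / 3 * (‖coordProj b q * (diagonalOp b' μ - diagonalOp b l) *
        coordProj b' (Finset.Iic k)‖ / g) := by
  set E := diagonalOp b' μ - diagonalOp b l
  have hhigh : ∀ i ∈ Finset.Iic k, l k - ‖E‖ ≤ μ i := fun i hi =>
    (sub_norm_diagonalOp_sub_le b b' hl hμ k).trans (hμ (Finset.mem_Iic.mp hi))
  have hDK := sub_mul_norm_coordProj_mul_coordProj_le b b' hlow hhigh
  rw [← mul_div_assoc, le_div_iff₀ hg]
  nlinarith [norm_nonneg (coordProj b q * coordProj b' (Finset.Iic k))]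

theorem norm_coordProj_Iic_sub_le_two_mul (hl : Antitone l) (hμ : Antitone μ) {s : Finset ι}
    (hs : Finset.Iic k ⊆ s) {δ Δ : ℝ} (hδ : 0 < δ) (hδΔ : δ ≤ Δ)
    (hnear : ∀ i, k < i → l i ≤ l k - δ) (hfar : ∀ i ∉ s, l i ≤ l k - Δ)
    (hE : 4 * ‖diagonalOp b' μ - diagonalOp b l‖ ≤ δ) :
    ‖coordProj b' (Finset.Iic k) - coordProj b (Finset.Iic k)‖ ≤
      2 * (‖diagonalOp b' μ - diagonalOp b l‖ / Δ +
        ‖coordProj b s * (diagonalOp b' μ - diagonalOp b l) * coordProj b s‖ / δ) := by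
  set E := diagonalOp b' μ - diagonalOp b l
  set N := ‖coordProj b s * E * coordProj b s‖
  have hΔ : 0 < Δ := hδ.trans_le hδΔ
  have hfar_block : ‖coordProj b sᶜ * coordProj b' (Finset.Iic k)‖ ≤ 4 / 3 * (‖E‖ / Δ) := by
    refine (norm_coordProj_mul_coordProj_Iic_le b b' hl hμ hΔ
      (fun i hi => hfar i (Finset.mem_compl.mp hi)) (hE.trans hδΔ)).trans ?_
    gcongr
    exact norm_coordProj_mul_mul_coordProj_le b b' _ _ _
  have hnear_block : ‖coordProj b (s \ Finset.Iic k) * coordProj b' (Finset.Iic k)‖ ≤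
      4 / 3 * ((N + ‖E‖ * (4 / 3 * (‖E‖ / Δ))) / δ) := by
    refine (norm_coordProj_mul_coordProj_Iic_le b b' hl hμ hδ
      (fun i hi => hnear i (by simpa using (Finset.mem_sdiff.mp hi).2)) hE).trans ?_
    gcongr
    exact (norm_coordProj_mul_mul_coordProj_le_add b b' Finset.sdiff_subset _ E).trans
      (by gcongr)
  have hEδ : ‖E‖ / δ ≤ 1 / 4 := by rw [div_le_iff₀ hδ]; linarith
  calc ‖coordProj b' (Finset.Iic k) - coordProj b (Finset.Iic k)‖
      ≤ 4 / 3 * ((N + ‖E‖ * (4 / 3 * (‖E‖ / Δ))) / δ) + 4 / 3 * (‖E‖ / Δ) :=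
        (norm_coordProj_sub_le_of_card_eq b b' rfl).trans <|
          (norm_coordProj_compl_mul_le b hs _).trans <|
            add_le_add hnear_block hfar_block
    _ = 4 / 3 * (N / δ) + (16 / 9 * (‖E‖ / δ) + 4 / 3) * (‖E‖ / Δ) := by ring
    _ ≤ 4 / 3 * (N / δ) + (16 / 9 * (1 / 4) + 4 / 3) * (‖E‖ / Δ) := by gcongr
    _ ≤ 2 * (‖E‖ / Δ + N / δ) := by
        have : 0 ≤ N / δ := by positivity
        have : 0 ≤ ‖E‖ / Δ := by positivity
        linarith

end Perturbation

section Compression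

variable {ι 𝕜 H : Type*} [Fintype ι] [RCLike 𝕜] [NormedAddCommGroup H] [InnerProductSpace 𝕜 H]
  (b : OrthonormalBasis ι 𝕜 H) {s : Finset ι}

theorem sq_sum_norm_inner_le (s : Finset ι) (z : H) :
    (∑ i ∈ s, ‖inner 𝕜 (b i) z‖) ^ 2 ≤ s.card * ‖z‖ ^ 2 :=
  sq_sum_le_card_mul_sum_sq.trans (by gcongr; exact b.orthonormal.sum_inner_products_le z)

theorem norm_inner_coordProj_apply_le [DecidableEq ι] [FiniteDimensional 𝕜 H] {T : H →L[𝕜] H}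
    {x : ℝ} {v : H} (hx : ∀ j ∈ s, ‖inner 𝕜 v (T (b j))‖ ≤ x) (z : H) :
    ‖inner 𝕜 v (T (coordProj b s z))‖ ≤ (∑ j ∈ s, ‖inner 𝕜 (b j) z‖) * x := by
  rw [coordProj_apply, map_sum, inner_sum, Finset.sum_mul]
  refine norm_sum_le_of_le s fun j hj => ?_
  rw [map_smul, inner_smul_right, norm_mul]
  gcongr
  exact hx j hj

theorem norm_coordProj_mul_mul_coordProj_le_card_mul [DecidableEq ι] [FiniteDimensional 𝕜 H]
    {T : H →L[𝕜] H} {x : ℝ}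
    (hx : ∀ i ∈ s, ∀ j ∈ s, ‖inner 𝕜 (b i) (T (b j))‖ ≤ x) :
    ‖coordProj b s * T * coordProj b s‖ ≤ s.card * x := by
  rcases s.eq_empty_or_nonempty with rfl | ⟨i₀, hi₀⟩
  · simp [coordProj_empty]
  have hx0 : 0 ≤ x := (norm_nonneg _).trans (hx i₀ hi₀ i₀ hi₀)
  refine ContinuousLinearMap.opNorm_le_bound _ (by positivity) fun z =>
    le_of_sq_le_sq ?_ (by positivity)
  calc ‖(coordProj b s * T * coordProj b s) z‖ ^ 2
      = ∑ i ∈ s, ‖inner 𝕜 (b i) (T (coordProj b s z))‖ ^ 2 := norm_sq_coordProj_apply b s _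
    _ ≤ ∑ _i ∈ s, ((∑ j ∈ s, ‖inner 𝕜 (b j) z‖) * x) ^ 2 := by
        gcongr with i hi
        exact norm_inner_coordProj_apply_le b (hx i hi) z
    _ = s.card * (∑ j ∈ s, ‖inner 𝕜 (b j) z‖) ^ 2 * x ^ 2 := by
        rw [Finset.sum_const, nsmul_eq_mul]; ring
    _ ≤ s.card * (s.card * ‖z‖ ^ 2) * x ^ 2 := by
        gcongr
        exact sq_sum_norm_inner_le b s z
    _ = (s.card * x * ‖z‖) ^ 2 := by ring

end Compression

section Matrix

variable {m ι 𝕜 : Type*} [Fintype m] [DecidableEq m] [RCLike 𝕜]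

theorem exists_orthonormalBasis_of_dotProduct {v : m → m → 𝕜}
    (hv : ∀ i j, star (v i) ⬝ᵥ v j = if i = j then 1 else 0) :
    ∃ b : OrthonormalBasis m 𝕜 (EuclideanSpace 𝕜 m), ∀ i, (b i).ofLp = v i := by
  have hon : Orthonormal 𝕜 fun i => WithLp.toLp 2 (v i) := by
    refine orthonormal_iff_ite.mpr fun i j => ?_
    rw [EuclideanSpace.inner_toLp_toLp, dotProduct_comm, hv]
  have hspan := hon.linearIndependent.span_eq_top_of_card_eq_finrank' finrank_euclideanSpace.symm
  exact ⟨OrthonormalBasis.mk hon hspan.ge, fun i => by rw [OrthonormalBasis.coe_mk]⟩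

variable [Fintype ι] [DecidableEq ι] (b : OrthonormalBasis ι 𝕜 (EuclideanSpace 𝕜 m))

theorem toEuclideanCLM_eq_diagonalOp {M : Matrix m m 𝕜} {f : ι → ℝ}
    (h : ∀ i, M *ᵥ (b i).ofLp = f i • (b i).ofLp) :
    toEuclideanCLM (𝕜 := 𝕜) M = diagonalOp b f := by
  refine (eq_diagonalOp_iff b).mpr fun i => ?_
  rw [← RCLike.real_smul_eq_coe_smul]
  exact WithLp.ofLp_injective 2 ((ofLp_toEuclideanCLM M (b i)).trans (h i))

theorem toEuclideanCLM_sum_vecMulVec (s : Finset ι) :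
    toEuclideanCLM (𝕜 := 𝕜) (∑ i ∈ s, vecMulVec (b i).ofLp (star (b i).ofLp)) =
      coordProj b s := by
  ext1 z
  rw [coordProj_apply, map_sum, _root_.sum_apply]
  refine Finset.sum_congr rfl fun i _ => WithLp.ofLp_injective 2 ?_
  rw [ofLp_toEuclideanCLM, vecMulVec_mulVec, op_smul_eq_smul, WithLp.ofLp_smul,
    EuclideanSpace.inner_eq_star_dotProduct, dotProduct_comm]

theorem norm_coordProj_mul_toEuclideanCLM_mul_coordProj_le {E : Matrix m m 𝕜} {s : Finset ι}
    {x : ℝ} (hx : ∀ i ∈ s, ∀ j ∈ s, ‖star (b i).ofLp ⬝ᵥ E *ᵥ (b j).ofLp‖ ≤ x) :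
    ‖coordProj b s * toEuclideanCLM (𝕜 := 𝕜) E * coordProj b s‖ ≤ s.card * x := by
  refine norm_coordProj_mul_mul_coordProj_le_card_mul b fun i hi j hj => ?_
  rw [EuclideanSpace.inner_eq_star_dotProduct, dotProduct_comm, ofLp_toEuclideanCLM]
  exact hx i hi j hj

end Matrix

section OneBased

theorem sum_Icc_one_val_add_one {M : Type*} [AddCommMonoid M] {n : ℕ} (g : ℕ → M) (k : Fin n) :
    ∑ i ∈ Finset.Icc 1 (k + 1 : ℕ), g i = ∑ i ∈ Finset.Iic k, g (i + 1) := by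
  have hIcc : Finset.Icc 1 (k + 1 : ℕ) =
      ((Finset.Iic k).map Fin.valEmbedding).map (addRightEmbedding 1) := by
    rw [Fin.map_valEmbedding_Iic, ← Finset.Icc_bot, Nat.bot_eq_zero,
      Finset.map_add_right_Icc, zero_add]
  rw [hIcc, Finset.sum_map, Finset.sum_map]
  rfl

variable {𝕜 : Type*} [RCLike 𝕜] {n : ℕ}

theorem val_add_one_mem_Icc (i : Fin n) : (i + 1 : ℕ) ∈ Finset.Icc 1 n :=
  Finset.mem_Icc.mpr ⟨Nat.le_add_left 1 i, i.2⟩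

theorem val_add_one_mem_Icc_of_mem_Iio {i k : Fin n} (hi : i ∈ Finset.Iio k) :
    (i + 1 : ℕ) ∈ Finset.Icc 1 (k : ℕ) :=
  Finset.mem_Icc.mpr ⟨Nat.le_add_left 1 i, Finset.mem_Iio.mp hi⟩

theorem antitone_val_add_one {lam : ℕ → ℝ}
    (h : ∀ i ∈ Finset.Icc 1 n, ∀ j ∈ Finset.Icc 1 n, i ≤ j → lam j ≤ lam i) :
    Antitone fun i : Fin n => lam (i + 1) := fun i j hij =>
  h _ (val_add_one_mem_Icc i) _ (val_add_one_mem_Icc j) (Nat.succ_le_succ hij)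

theorem specNorm_eq_norm_toEuclideanCLM (M : Matrix (Fin n) (Fin n) 𝕜) :
    specNorm M = ‖toEuclideanCLM (𝕜 := 𝕜) M‖ :=
  rfl

theorem abs_le_specNorm {A : Matrix (Fin n) (Fin n) 𝕜} {v : Fin n → 𝕜} {c : ℝ} (hv : v ≠ 0)
    (hAv : A *ᵥ v = c • v) : |c| ≤ specNorm A := by
  have hle := (toEuclideanCLM (𝕜 := 𝕜) A).le_opNorm (WithLp.toLp 2 v)
  rw [toEuclideanCLM_toLp, hAv, WithLp.toLp_smul, norm_smul, Real.norm_eq_abs] at hle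
  exact le_of_mul_le_mul_right hle (by simpa using hv)

theorem exists_orthonormalBasis_of_mulVec_eq_smul {M : Matrix (Fin n) (Fin n) 𝕜} {lam : ℕ → ℝ}
    {u : ℕ → Fin n → 𝕜}
    (hon : ∀ i ∈ Finset.Icc 1 n, ∀ j ∈ Finset.Icc 1 n,
      star (u i) ⬝ᵥ u j = if i = j then 1 else 0)
    (heig : ∀ i ∈ Finset.Icc 1 n, M *ᵥ u i = lam i • u i) :
    ∃ b : OrthonormalBasis (Fin n) 𝕜 (EuclideanSpace 𝕜 (Fin n)),
      (∀ i, (b i).ofLp = u (i + 1)) ∧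
      toEuclideanCLM (𝕜 := 𝕜) M = diagonalOp b (fun i => lam (i + 1)) ∧
      ∀ k : Fin n, toEuclideanCLM (𝕜 := 𝕜)
        (∑ i ∈ Finset.Icc 1 (k + 1 : ℕ), vecMulVec (u i) (star (u i))) =
          coordProj b (Finset.Iic k) := by
  have hmem := val_add_one_mem_Icc (n := n)
  obtain ⟨b, hb⟩ := exists_orthonormalBasis_of_dotProduct (v := fun i : Fin n => u (i + 1))
    fun i j => by simpa [Fin.ext_iff] using hon _ (hmem i) _ (hmem j)
  refine ⟨b, hb, toEuclideanCLM_eq_diagonalOp b fun i => ?_, fun k => ?_⟩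
  · rw [hb, heig _ (hmem i)]
  · rw [← toEuclideanCLM_sum_vecMulVec, sum_Icc_one_val_add_one]
    simp only [hb]

theorem specNorm_sum_vecMulVec_sub_le (A E : Matrix (Fin n) (Fin n) 𝕜)
    (lam tlam : ℕ → ℝ) (u tu : ℕ → (Fin n → 𝕜))
    (hlam_mono : ∀ i ∈ Finset.Icc 1 n, ∀ j ∈ Finset.Icc 1 n, i ≤ j → lam j ≤ lam i)
    (htlam_mono : ∀ i ∈ Finset.Icc 1 n, ∀ j ∈ Finset.Icc 1 n, i ≤ j → tlam j ≤ tlam i)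
    (hu_on : ∀ i ∈ Finset.Icc 1 n, ∀ j ∈ Finset.Icc 1 n,
      star (u i) ⬝ᵥ u j = if i = j then 1 else 0)
    (htu_on : ∀ i ∈ Finset.Icc 1 n, ∀ j ∈ Finset.Icc 1 n,
      star (tu i) ⬝ᵥ tu j = if i = j then 1 else 0)
    (hu_eig : ∀ i ∈ Finset.Icc 1 n, A *ᵥ u i = lam i • u i)
    (htu_eig : ∀ i ∈ Finset.Icc 1 n, (A + E) *ᵥ tu i = tlam i • tu i)
    {p r : ℕ} (hp : 1 ≤ p) (hpr : p ≤ r) (hrn : r < n) {x : ℝ}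
    (hx : ∀ i ∈ Finset.Icc 1 r, ∀ j ∈ Finset.Icc 1 r, ‖star (u i) ⬝ᵥ E *ᵥ u j‖ ≤ x)
    (hgap_pos : 0 < lam p - lam (p + 1))
    (hgap : 4 * specNorm E ≤ lam p - lam (p + 1)) :
    specNorm ((∑ i ∈ Finset.Icc 1 p, vecMulVec (tu i) (star (tu i)))
        - ∑ i ∈ Finset.Icc 1 p, vecMulVec (u i) (star (u i)))
      ≤ 2 * (specNorm E / (lam p - lam (r + 1)) + r * x / (lam p - lam (p + 1))) := by
  obtain ⟨k, rfl⟩ : ∃ k : Fin n, (k + 1 : ℕ) = p := ⟨⟨p - 1, by lia⟩, Nat.sub_add_cancel hp⟩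
  obtain ⟨b, hb, hA, hproj⟩ := exists_orthonormalBasis_of_mulVec_eq_smul hu_on hu_eig
  obtain ⟨b', -, hAE, hproj'⟩ := exists_orthonormalBasis_of_mulVec_eq_smul htu_on htu_eig
  have hblock : ‖coordProj b (Finset.Iio ⟨r, hrn⟩) * toEuclideanCLM (𝕜 := 𝕜) E *
      coordProj b (Finset.Iio ⟨r, hrn⟩)‖ ≤ r * x := by
    have hle := norm_coordProj_mul_toEuclideanCLM_mul_coordProj_le b (E := E) (x := x)
      (s := Finset.Iio ⟨r, hrn⟩) fun i hi j hj => by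
        rw [hb, hb]
        exact hx _ (val_add_one_mem_Icc_of_mem_Iio hi) _ (val_add_one_mem_Icc_of_mem_Iio hj)
    rwa [Fin.card_Iio] at hle
  have hlam_le : ∀ i j : ℕ, 1 ≤ i → i ≤ j → j ≤ n → lam j ≤ lam i := fun i j hi hij hj =>
    hlam_mono i (Finset.mem_Icc.mpr ⟨hi, hij.trans hj⟩) j
      (Finset.mem_Icc.mpr ⟨hi.trans hij, hj⟩) hij
  have hE : toEuclideanCLM (𝕜 := 𝕜) E =
      diagonalOp b' (fun i => tlam (i + 1)) - diagonalOp b (fun i => lam (i + 1)) := by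
    rw [← hA, ← hAE, map_add, add_sub_cancel_left]
  rw [specNorm_eq_norm_toEuclideanCLM, hE] at hgap
  have hbound := norm_coordProj_Iic_sub_le_two_mul b b' (antitone_val_add_one hlam_mono)
    (antitone_val_add_one htlam_mono) (k := k) (s := Finset.Iio ⟨r, hrn⟩)
    (δ := lam (k + 1) - lam (k + 1 + 1)) (Δ := lam (k + 1) - lam (r + 1))
    (fun i hi => Finset.mem_Iio.mpr ((Finset.mem_Iic.mp hi).trans_lt (Fin.lt_def.mpr hpr)))
    hgap_pos
    (sub_le_sub_left (hlam_le _ _ (by lia) (by lia) hrn) _)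
    (fun i hi => by
      rw [sub_sub_cancel]; exact hlam_le _ _ (by lia) (by lia) i.2)
    (fun i hi => by
      have hri : r ≤ i := Fin.le_def.mp (not_lt.mp (Finset.mem_Iio.not.mp hi))
      rw [sub_sub_cancel]; exact hlam_le _ _ (by lia) (Nat.succ_le_succ hri) i.2)
    hgap
  rw [← hE, ← hproj, ← hproj', ← map_sub] at hbound
  refine hbound.trans ?_
  rw [specNorm_eq_norm_toEuclideanCLM]
  gcongr

theorem two_mul_div_add_div_le {e m σ x r δ Δ : ℝ} (he : 0 ≤ e) (hm : 0 < m) (hx : 0 ≤ x)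
    (hr : 1 ≤ r) (hδ : 0 < δ) (hδσ : δ ≤ 2 * σ) (hΔ : m / 2 ≤ Δ) :
    2 * (e / Δ + r * x / δ) ≤ 24 * (e / m * Real.log (6 * σ / δ) + r ^ 2 * x / δ) := by
  have hlog : 1 ≤ Real.log (6 * σ / δ) := by
    have hthree : 3 ≤ 6 * σ / δ := by rw [le_div_iff₀ hδ]; linarith
    rw [Real.le_log_iff_exp_le (by linarith)]
    linarith [Real.exp_one_lt_d9]
  have hgap : e / Δ ≤ 2 * (e / m) :=
    calc e / Δ ≤ e / (m / 2) := by gcongr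
      _ = 2 * (e / m) := by field_simp
  calc 2 * (e / Δ + r * x / δ) ≤ 24 * (e / m * 1 + r * x / δ) := by
        have : 0 ≤ e / m := by positivity
        have : 0 ≤ r * x / δ := by positivity
        linarith
    _ ≤ 24 * (e / m * Real.log (6 * σ / δ) + r ^ 2 * x / δ) := by
        gcongr
        exact le_self_pow₀ hr two_ne_zero

theorem main_moderate_gap_general (A E : Matrix (Fin n) (Fin n) 𝕜)
    (lam tlam : ℕ → ℝ) (u tu : ℕ → (Fin n → 𝕜))
    (hlam_mono : ∀ i ∈ Finset.Icc 1 n, ∀ j ∈ Finset.Icc 1 n, i ≤ j → lam j ≤ lam i)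
    (htlam_mono : ∀ i ∈ Finset.Icc 1 n, ∀ j ∈ Finset.Icc 1 n, i ≤ j → tlam j ≤ tlam i)
    (hu_on : ∀ i ∈ Finset.Icc 1 n, ∀ j ∈ Finset.Icc 1 n,
      star (u i) ⬝ᵥ u j = if i = j then 1 else 0)
    (htu_on : ∀ i ∈ Finset.Icc 1 n, ∀ j ∈ Finset.Icc 1 n,
      star (tu i) ⬝ᵥ tu j = if i = j then 1 else 0)
    (hu_eig : ∀ i ∈ Finset.Icc 1 n, A *ᵥ u i = lam i • u i)
    (htu_eig : ∀ i ∈ Finset.Icc 1 n, (A + E) *ᵥ tu i = tlam i • tu i)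
    {p r : ℕ} (hp : 1 ≤ p) (hpr : p ≤ r) (hrn : r < n)
    (hlam_ne : lam p ≠ 0) (hr_half : |lam p| / 2 ≤ lam p - lam (r + 1)) {x : ℝ}
    (hx : ∀ i ∈ Finset.Icc 1 r, ∀ j ∈ Finset.Icc 1 r, ‖star (u i) ⬝ᵥ E *ᵥ u j‖ ≤ x)
    (hgap_pos : 0 < lam p - lam (p + 1))
    (hgap : 4 * specNorm E ≤ lam p - lam (p + 1)) :
    specNorm ((∑ i ∈ Finset.Icc 1 p, vecMulVec (tu i) (star (tu i)))
        - ∑ i ∈ Finset.Icc 1 p, vecMulVec (u i) (star (u i)))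
      ≤ 24 * (specNorm E / |lam p| * Real.log (6 * specNorm A / (lam p - lam (p + 1)))
        + (r : ℝ) ^ 2 * x / (lam p - lam (p + 1))) := by
  have hlam_le : ∀ i ∈ Finset.Icc 1 n, |lam i| ≤ specNorm A := fun i hi =>
    abs_le_specNorm (fun hu => by simpa [hu] using hu_on i hi i hi) (hu_eig i hi)
  have hgap_le : lam p - lam (p + 1) ≤ 2 * specNorm A := by
    have hp_le := hlam_le p (Finset.mem_Icc.mpr ⟨hp, by lia⟩)
    have hp1_le := hlam_le (p + 1) (Finset.mem_Icc.mpr ⟨by lia, by lia⟩)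
    linarith [le_abs_self (lam p), neg_abs_le (lam (p + 1))]
  have hx_nonneg : 0 ≤ x :=
    have h1 : 1 ∈ Finset.Icc 1 r := Finset.left_mem_Icc.mpr (hp.trans hpr)
    (norm_nonneg _).trans (hx 1 h1 1 h1)
  exact (specNorm_sum_vecMulVec_sub_le A E lam tlam u tu hlam_mono htlam_mono hu_on htu_on hu_eig
    htu_eig hp hpr hrn hx hgap_pos hgap).trans
      (two_mul_div_add_div_le (norm_nonneg _) (abs_pos.mpr hlam_ne) hx_nonneg
        (by exact_mod_cast hp.trans hpr) hgap_pos hgap_le hr_half)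

end OneBased

/-- **Main theorem (moderate gap bound).** (Indices are 1-based; `σ₁ = ‖A‖`.) -/
theorem main_moderate_gap
    {n : ℕ} (A E : Matrix (Fin n) (Fin n) ℝ) (hA : A.IsSymm) (hE : E.IsSymm)
    (lam tlam : ℕ → ℝ) (u tu : ℕ → (Fin n → ℝ))
    (hlam_mono : ∀ i ∈ Finset.Icc 1 n, ∀ j ∈ Finset.Icc 1 n, i ≤ j → lam j ≤ lam i)
    (htlam_mono : ∀ i ∈ Finset.Icc 1 n, ∀ j ∈ Finset.Icc 1 n, i ≤ j → tlam j ≤ tlam i)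
    (hu_on : ∀ i ∈ Finset.Icc 1 n, ∀ j ∈ Finset.Icc 1 n,
      u i ⬝ᵥ u j = if i = j then 1 else 0)
    (htu_on : ∀ i ∈ Finset.Icc 1 n, ∀ j ∈ Finset.Icc 1 n,
      tu i ⬝ᵥ tu j = if i = j then 1 else 0)
    (hu_eig : ∀ i ∈ Finset.Icc 1 n, A *ᵥ u i = lam i • u i)
    (htu_eig : ∀ i ∈ Finset.Icc 1 n, (A + E) *ᵥ tu i = tlam i • tu i)
    (p : ℕ) (hp1 : 1 ≤ p) (hpn : p < n)
    (r : ℕ) (hpr : p ≤ r) (hrn : r < n)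
    (hr_half : |lam p| / 2 ≤ lam p - lam (r + 1))
    (x : ℝ)
    (hx : x = (Finset.Icc 1 r ×ˢ Finset.Icc 1 r).sup'
      (Finset.Nonempty.product ⟨1, Finset.mem_Icc.mpr ⟨le_refl 1, le_trans hp1 hpr⟩⟩
        ⟨1, Finset.mem_Icc.mpr ⟨le_refl 1, le_trans hp1 hpr⟩⟩)
      (fun q => |u q.1 ⬝ᵥ E *ᵥ u q.2|))
    (δp : ℝ) (hδp : δp = lam p - lam (p + 1))
    (hE_pos : 0 < specNorm E)
    (hgap_lo : 4 * specNorm E ≤ δp) (hgap_hi : δp ≤ |lam p| / 4) :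
    specNorm ((∑ i ∈ Finset.Icc 1 p, vecMulVec (tu i) (tu i))
        - ∑ i ∈ Finset.Icc 1 p, vecMulVec (u i) (u i))
      ≤ 24 * (specNorm E / |lam p| * Real.log (6 * specNorm A / δp)
        + (r : ℝ) ^ 2 * x / δp) := by
  subst hδp
  exact main_moderate_gap_general A E lam tlam u tu hlam_mono htlam_mono hu_on htu_on hu_eig
    htu_eig hp1 hpr hrn (abs_pos.mp (by linarith)) hr_half
    (fun i hi j hj => hx ▸ Finset.le_sup' (fun q : ℕ × ℕ => |u q.1 ⬝ᵥ E *ᵥ u q.2|)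
      (Finset.mk_mem_product hi hj))
    (by linarith) hgap_lo
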